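/- There is no ℤ-module automorphism φ of ℤ² that maps S₁ := {v ∈ ℤ² : v = a·(1,−1) + b·(0,1) for some rationals a, b ≥ 0} bijectively onto S₂ := {v ∈ ℤ² : v = a·(−1,2) + b·(1,0) for some rationals a, b ≥ 0}. (This is the step in the proof of Theorem 1.5 distinguishing the varieties No. 6 and No. 7: the effective cone Eff(X₆) = cone((1,−1),(0,1)) is a smooth cone whereas Eff(X₇) = cone((−1,2),(1,0)) is not, so no lattice isomorphism maps one onto the other.) -/

import Mathlib

/-!
The lattice points of `cone((1,-1),(0,1))` form the monoid `ℕ·(1,-1) + ℕ·(0,1)`, since the two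
generators are a basis of `ℤ²`. An isomorphism `φ` onto the second monoid would therefore make
every element of the latter an `ℕ`-combination of `φ(1,-1)` and `φ(0,1)`. The functional
`h(x,y) = x + y` takes positive integer values on the nonzero points of the second cone, so each
point with `h = 1` is indecomposable and must be one of these two images. But the cone contains
three such points, `(1,0)`, `(0,1)` and `(-1,2)`.
-/

/-- The lattice points of the cone in `ℤ²` generated by `(1,−1)` and `(0,1)`. -/
def coneS1 : Set (ℤ × ℤ) :=
  {v | ∃ a b : ℚ, 0 ≤ a ∧ 0 ≤ b ∧
    (v.1 : ℚ) = a * 1 + b * 0 ∧ (v.2 : ℚ) = a * (-1) + b * 1}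

/-- The lattice points of the cone in `ℤ²` generated by `(−1,2)` and `(1,0)`. -/
def coneS2 : Set (ℤ × ℤ) :=
  {v | ∃ a b : ℚ, 0 ≤ a ∧ 0 ≤ b ∧
    (v.1 : ℚ) = a * (-1) + b * 1 ∧ (v.2 : ℚ) = a * 2 + b * 0}

theorem mem_coneS1_iff (v : ℤ × ℤ) : v ∈ coneS1 ↔ 0 ≤ v.1 ∧ 0 ≤ v.1 + v.2 := by
  constructor
  · rintro ⟨a, b, ha, hb, h1, h2⟩
    constructor
    · have : (0 : ℚ) ≤ v.1 := by linarith
      exact_mod_cast this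
    · have : (0 : ℚ) ≤ v.1 + v.2 := by linarith
      exact_mod_cast this
  · rintro ⟨h1, h2⟩
    exact ⟨v.1, v.1 + v.2, by exact_mod_cast h1, by exact_mod_cast h2, by ring, by ring⟩

theorem mem_coneS2_iff (v : ℤ × ℤ) : v ∈ coneS2 ↔ 0 ≤ v.2 ∧ 0 ≤ 2 * v.1 + v.2 := by
  constructor
  · rintro ⟨a, b, ha, hb, h1, h2⟩
    constructor
    · have : (0 : ℚ) ≤ v.2 := by linarith
      exact_mod_cast this
    · have : (0 : ℚ) ≤ 2 * v.1 + v.2 := by linarith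
      exact_mod_cast this
  · rintro ⟨h1, h2⟩
    have h1' : (0 : ℚ) ≤ v.2 := by exact_mod_cast h1
    have h2' : (0 : ℚ) ≤ 2 * v.1 + v.2 := by exact_mod_cast h2
    exact ⟨v.2 / 2, (2 * v.1 + v.2) / 2, by linarith, by linarith, by ring, by ring⟩

/-- The functional `(x, y) ↦ x + y` is positive on nonzero lattice points of the second cone. -/
theorem one_le_of_mem_coneS2 {v : ℤ × ℤ} (hv : v ∈ coneS2) (h0 : v ≠ 0) : 1 ≤ v.1 + v.2 := by
  rw [mem_coneS2_iff] at hv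
  by_contra h
  exact h0 (Prod.ext (show v.1 = 0 by omega) (show v.2 = 0 by omega))

/-- A point of the second cone of height `1` is the image of a generator of the first cone. -/
theorem eq_image_generator (φ : (ℤ × ℤ) ≃ₗ[ℤ] (ℤ × ℤ)) (hφ : Set.BijOn φ coneS1 coneS2)
    {z : ℤ × ℤ} (hz : z ∈ coneS2) (h1 : z.1 + z.2 = 1) : z = φ (1, -1) ∨ z = φ (0, 1) := by
  have hu : 1 ≤ (φ (1, -1)).1 + (φ (1, -1)).2 :=
    one_le_of_mem_coneS2 (hφ.mapsTo ((mem_coneS1_iff _).2 (by norm_num)))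
      (φ.map_ne_zero_iff.2 (by simp))
  have hw : 1 ≤ (φ (0, 1)).1 + (φ (0, 1)).2 :=
    one_le_of_mem_coneS2 (hφ.mapsTo ((mem_coneS1_iff _).2 (by norm_num)))
      (φ.map_ne_zero_iff.2 (by simp))
  obtain ⟨v, hv, rfl⟩ := hφ.surjOn hz
  obtain ⟨hx, hy⟩ := (mem_coneS1_iff v).1 hv
  have hdec : v = v.1 • ((1, -1) : ℤ × ℤ) + (v.1 + v.2) • ((0, 1) : ℤ × ℤ) := by
    ext <;> simp
  have himg : φ v = v.1 • φ (1, -1) + (v.1 + v.2) • φ (0, 1) := by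
    conv_lhs => rw [hdec]
    rw [map_add, map_smul, map_smul]
  generalize v.1 + v.2 = y at *
  generalize v.1 = x at *
  generalize φ (1, -1) = u at *
  generalize φ (0, 1) = w at *
  rw [himg] at h1 ⊢
  simp only [Prod.fst_add, Prod.snd_add, Prod.smul_fst, Prod.smul_snd, smul_eq_mul] at h1
  have hsum : x + y ≤ 1 := by nlinarith
  have hne : ¬ (x = 0 ∧ y = 0) := by
    rintro ⟨rfl, rfl⟩
    simp at h1
  have hcases : (x = 1 ∧ y = 0) ∨ (x = 0 ∧ y = 1) := by omega
  rcases hcases with ⟨rfl, rfl⟩ | ⟨rfl, rfl⟩ <;> simp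

/-- Step in the proof of Theorem 1.5 distinguishing varieties No. 6 and No. 7: no
`ℤ`-module automorphism of `ℤ²` maps the lattice points of `cone((1,−1),(0,1))`
bijectively onto those of `cone((−1,2),(1,0))`. -/
theorem no_lattice_isomorphism_of_cones :
    ¬ ∃ φ : (ℤ × ℤ) ≃ₗ[ℤ] (ℤ × ℤ), Set.BijOn φ coneS1 coneS2 := by
  rintro ⟨φ, hφ⟩
  have hp := eq_image_generator φ hφ (z := (1, 0)) ((mem_coneS2_iff _).2 (by norm_num)) (by norm_num)
  have hq := eq_image_generator φ hφ (z := (0, 1)) ((mem_coneS2_iff _).2 (by norm_num)) (by norm_num)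
  have hr := eq_image_generator φ hφ (z := (-1, 2)) ((mem_coneS2_iff _).2 (by norm_num))
    (by norm_num)
  generalize φ (1, -1) = u at *
  generalize φ (0, 1) = w at *
  -- Two of the three distinct points must coincide.
  rcases hp with hp | hp <;> rcases hq with hq | hq <;> rcases hr with hr | hr <;>
    grind
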